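/- Let X be a real Banach space with a Schauder basis (e_n). Then (e_n) is partially greedy if and only if there exists a constant C such that ‖x − G_m(x)‖ ≤ C‖x − Σ_{i∈A} a_i e_i‖ for all x ∈ X, all m ∈ ℕ, every greedy ordering for x, every finite set A ⊂ ℕ with |A| = m and max A < α_m(x), and all real scalars (a_i)_{i∈A} (i.e., ‖x − G_m(x)‖ ≤ C·σ^L_m(x)). -/

import Mathlib

open Filter Topology

/-- A Schauder basis of a real normed space `X`, given by basis vectors `e n` together with
biorthogonal (coordinate) functionals `f n`, such that every `x` is the limit of its
partial-sum expansion `∑_{n < N} f n x • e n`. -/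
structure SchauderBasisSys (X : Type*) [NormedAddCommGroup X] [NormedSpace ℝ X] where
  e : ℕ → X
  f : ℕ → X →L[ℝ] ℝ
  biorth : ∀ m n : ℕ, f m (e n) = if m = n then (1 : ℝ) else 0
  expansion : ∀ x : X,
    Filter.Tendsto (fun N : ℕ => ∑ n ∈ Finset.range N, f n x • e n) Filter.atTop (nhds x)

namespace SchauderBasisSys

variable {X : Type*} [NormedAddCommGroup X] [NormedSpace ℝ X]

/-- The coordinate projection onto a finite set `A` of indices: `P_A x = ∑_{i ∈ A} e_i^*(x) e_i`. -/
noncomputable def P (S : SchauderBasisSys X) (A : Finset ℕ) (x : X) : X :=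
  ∑ i ∈ A, S.f i x • S.e i

/-- The indicator vector `1_A = ∑_{i ∈ A} e_i`. -/
noncomputable def ind (S : SchauderBasisSys X) (A : Finset ℕ) : X :=
  ∑ i ∈ A, S.e i

/-- A greedy ordering for `x`: an injection `ρ : ℕ → ℕ` whose range contains the support of `x`
and which rearranges the coordinates of `x` in nonincreasing order of absolute value. -/
def IsGreedyOrdering (S : SchauderBasisSys X) (x : X) (ρ : ℕ → ℕ) : Prop :=
  Function.Injective ρ ∧ (∀ n : ℕ, S.f n x ≠ 0 → n ∈ Set.range ρ) ∧
    ∀ j k : ℕ, j ≤ k → |S.f (ρ k) x| ≤ |S.f (ρ j) x|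

/-- The greedy set `Λ_m(x) = {ρ(0), …, ρ(m-1)}` associated to a greedy ordering `ρ`. -/
def Lam (ρ : ℕ → ℕ) (m : ℕ) : Finset ℕ := (Finset.range m).image ρ

/-- The `m`-th greedy approximation `G_m(x) = ∑_{j < m} e_{ρ(j)}^*(x) e_{ρ(j)}`. -/
noncomputable def G (S : SchauderBasisSys X) (x : X) (ρ : ℕ → ℕ) (m : ℕ) : X :=
  ∑ j ∈ Finset.range m, S.f (ρ j) x • S.e (ρ j)

/-- Quasi-greedy: `‖G_m(x)‖ ≤ K ‖x‖` uniformly. -/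
def QuasiGreedy (S : SchauderBasisSys X) : Prop :=
  ∃ K : ℝ, ∀ (x : X) (ρ : ℕ → ℕ) (m : ℕ),
    S.IsGreedyOrdering x ρ → ‖S.G x ρ m‖ ≤ K * ‖x‖

/-- Conservative: `‖1_A‖ ≤ Γ ‖1_B‖` whenever `|A| ≤ |B|` and `max A < min B`. -/
def Conservative (S : SchauderBasisSys X) : Prop :=
  ∃ Γ : ℝ, ∀ A B : Finset ℕ, A.card ≤ B.card →
    (∀ i ∈ A, ∀ j ∈ B, i < j) → ‖S.ind A‖ ≤ Γ * ‖S.ind B‖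

/-- Reverse conservative: `‖1_A‖ ≤ Γ ‖1_B‖` whenever `|A| ≤ |B|` and `max B < min A`. -/
def ReverseConservative (S : SchauderBasisSys X) : Prop :=
  ∃ Γ : ℝ, ∀ A B : Finset ℕ, A.card ≤ B.card →
    (∀ i ∈ A, ∀ j ∈ B, j < i) → ‖S.ind A‖ ≤ Γ * ‖S.ind B‖

/-- Partially greedy: `‖x - G_m(x)‖ ≤ C ‖∑_{n ≥ m} e_n^*(x) e_n‖ = C ‖x - P_{[0,m)}(x)‖`. -/
def PartiallyGreedy (S : SchauderBasisSys X) : Prop :=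
  ∃ C : ℝ, ∀ (x : X) (ρ : ℕ → ℕ) (m : ℕ), S.IsGreedyOrdering x ρ →
    ‖x - S.G x ρ m‖ ≤ C * ‖x - S.P (Finset.range m) x‖

/-- Almost greedy: `‖x - G_m(x)‖ ≤ C inf{‖x - P_A(x)‖ : |A| ≤ m}`. -/
def AlmostGreedy (S : SchauderBasisSys X) : Prop :=
  ∃ C : ℝ, ∀ (x : X) (ρ : ℕ → ℕ) (m : ℕ) (A : Finset ℕ), S.IsGreedyOrdering x ρ →
    A.card ≤ m → ‖x - S.G x ρ m‖ ≤ C * ‖x - S.P A x‖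

end SchauderBasisSys

namespace SchauderBasisSys

variable {X : Type*} [NormedAddCommGroup X] [NormedSpace ℝ X] (S : SchauderBasisSys X)

/-- A finite set carrying coordinates of `x` at least as large, in absolute value, as all others. -/
def IsGreedySet (x : X) (E : Finset ℕ) : Prop :=
  ∀ i ∈ E, ∀ j ∉ E, |S.f j x| ≤ |S.f i x|

variable {S}

theorem coord_sum (A : Finset ℕ) (a : ℕ → ℝ) (n : ℕ) :
    S.f n (∑ i ∈ A, a i • S.e i) = if n ∈ A then a n else 0 := by
  simp [S.biorth]

theorem coord_P (A : Finset ℕ) (x : X) (n : ℕ) :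
    S.f n (S.P A x) = if n ∈ A then S.f n x else 0 :=
  coord_sum A (fun i => S.f i x) n

theorem coord_ind (A : Finset ℕ) (n : ℕ) : S.f n (S.ind A) = if n ∈ A then 1 else 0 := by
  simp [ind, S.biorth]

theorem ext_coord {x y : X} (h : ∀ n, S.f n x = S.f n y) : x = y := by
  refine tendsto_nhds_unique (S.expansion x) ?_
  simpa only [h] using S.expansion y

theorem tendsto_P_range (x : X) : Tendsto (fun N => S.P (Finset.range N) x) atTop (𝓝 x) :=
  S.expansion x

theorem P_P_of_subset {A B : Finset ℕ} (h : A ⊆ B) (x : X) : S.P A (S.P B x) = S.P A x :=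
  Finset.sum_congr rfl fun i hi => by rw [coord_P, if_pos (h hi)]

theorem exists_norm_P_range_le [CompleteSpace X] (S : SchauderBasisSys X) :
    ∃ K : ℝ, 0 ≤ K ∧ ∀ (n : ℕ) (x : X), ‖S.P (Finset.range n) x‖ ≤ K * ‖x‖ := by
  let T : ℕ → X →L[ℝ] X := fun n => ∑ i ∈ Finset.range n, (S.f i).smulRight (S.e i)
  have hT : ∀ n x, T n x = S.P (Finset.range n) x := fun n x => by simp [T, P]
  obtain ⟨K, hK⟩ := banach_steinhaus (g := T) fun x => by
    obtain ⟨M, hM⟩ := isBounded_iff_forall_norm_le.mp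
      (Metric.isBounded_range_of_tendsto _ (S.tendsto_P_range x))
    exact ⟨M, fun n => hT n x ▸ hM _ ⟨n, rfl⟩⟩
  refine ⟨K, (norm_nonneg _).trans (hK 0), fun n x => ?_⟩
  rw [← hT]
  exact (T n).le_of_opNorm_le (hK n) x

theorem card_Lam {ρ : ℕ → ℕ} (h : Function.Injective ρ) (m : ℕ) : (Lam ρ m).card = m := by
  simp [Lam, Finset.card_image_of_injective _ h]

theorem G_eq_P_Lam {ρ : ℕ → ℕ} (h : Function.Injective ρ) (x : X) (m : ℕ) :
    S.G x ρ m = S.P (Lam ρ m) x := by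
  simp [G, P, Lam, Finset.sum_image h.injOn]

theorem IsGreedyOrdering.isGreedySet_Lam {x : X} {ρ : ℕ → ℕ} (h : S.IsGreedyOrdering x ρ)
    (m : ℕ) : S.IsGreedySet x (Lam ρ m) := by
  intro i hi j hj
  obtain ⟨k, hk, rfl⟩ := Finset.mem_image.mp hi
  by_cases h0 : S.f j x = 0
  · simp [h0]
  · obtain ⟨l, rfl⟩ := h.2.1 j h0
    have hl : l ∉ Finset.range m := fun hl => hj (Finset.mem_image_of_mem ρ hl)
    simp only [Finset.mem_range] at hk hl
    exact h.2.2 k l (by omega)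

/-- A greedy set of a finitely supported vector is an initial segment of a greedy ordering. -/
theorem exists_isGreedyOrdering_Lam_eq {x : X} {E : Finset ℕ} {M : ℕ}
    (hE : S.IsGreedySet x E) (hEM : E ⊆ Finset.range M) (hx : ∀ n, M ≤ n → S.f n x = 0) :
    ∃ ρ : ℕ → ℕ, S.IsGreedyOrdering x ρ ∧ Lam ρ E.card = E := by
  let key : Fin M → ℕ ×ₗ ℝ := fun n => toLex (if (n : ℕ) ∈ E then 0 else 1, -|S.f n x|)
  let σ := Tuple.sort key
  let ρ : Equiv.Perm ℕ := σ.extendDomain Fin.equivSubtype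
  have ρ_lt : ∀ n (h : n < M), ρ n = σ ⟨n, h⟩ := fun n h =>
    Equiv.Perm.extendDomain_apply_subtype σ Fin.equivSubtype h
  have ρ_ge : ∀ n, M ≤ n → ρ n = n := fun n h =>
    Equiv.Perm.extendDomain_apply_not_subtype σ Fin.equivSubtype (not_lt.mpr h)
  have hkey : ∀ j k, j ≤ k → k < M → (ρ j ∈ E ∧ ρ k ∉ E) ∨
      ((ρ j ∈ E ↔ ρ k ∈ E) ∧ |S.f (ρ k) x| ≤ |S.f (ρ j) x|) := by
    intro j k hjk hk
    have hle : key (σ ⟨j, hjk.trans_lt hk⟩) ≤ key (σ ⟨k, hk⟩) :=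
      Tuple.monotone_sort key (show (⟨j, _⟩ : Fin M) ≤ ⟨k, hk⟩ from hjk)
    rw [Prod.Lex.le_iff] at hle
    rw [ρ_lt j (hjk.trans_lt hk), ρ_lt k hk]
    simp only [key, ofLex_toLex, neg_le_neg_iff] at hle
    split_ifs at hle <;> simp_all
  have hmem : ∀ n, ρ n ∈ E → n < M := by
    intro n hn
    by_contra! h
    have := hEM hn
    rw [ρ_ge n h, Finset.mem_range] at this
    omega
  refine ⟨ρ, ⟨ρ.injective, fun n _ => ρ.surjective n, fun j k hjk => ?_⟩, ?_⟩
  · rcases lt_or_ge k M with hk | hk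
    · rcases hkey j k hjk hk with h | h
      · exact hE _ h.1 _ h.2
      · exact h.2
    · simp [ρ_ge k hk, hx k hk]
  · refine Finset.eq_of_subset_of_card_le (fun i hi => ?_) (card_Lam ρ.injective _).ge
    obtain ⟨j, hj, rfl⟩ := Finset.mem_image.mp hi
    by_contra hjE
    have hsub : E ⊆ Lam ρ j := fun n hn => by
      obtain ⟨k, rfl⟩ := ρ.surjective n
      refine Finset.mem_image_of_mem ρ (Finset.mem_range.mpr ?_)
      by_contra! hjk
      rcases hkey j k hjk (hmem k hn) with h | h <;> tauto
    have := Finset.card_le_card hsub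
    rw [card_Lam ρ.injective] at this
    simp only [Finset.mem_range] at hj
    omega

/-- An estimate for greedy orderings of the partial sums of `y` passes to greedy sets of `y`. -/
theorem IsGreedySet.norm_sub_P_le {y b : X} {E : Finset ℕ} {C : ℝ} (hE : S.IsGreedySet y E)
    (h : ∀ᶠ M in atTop, ∀ ρ, S.IsGreedyOrdering (S.P (Finset.range M) y) ρ → Lam ρ E.card = E →
      ‖S.P (Finset.range M) y - S.G (S.P (Finset.range M) y) ρ E.card‖ ≤
        C * ‖S.P (Finset.range M) y - b‖) :
    ‖y - S.P E y‖ ≤ C * ‖y - b‖ := by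
  have hlim := S.tendsto_P_range y
  refine le_of_tendsto_of_tendsto ((hlim.sub_const (S.P E y)).norm)
    (((hlim.sub_const b).norm).const_mul C) ?_
  filter_upwards [h, eventually_ge_atTop (E.sup id + 1)] with M hM hEM
  have hsub : E ⊆ Finset.range M := fun i hi => by
    have : i ≤ E.sup id := Finset.le_sup (f := id) hi
    exact Finset.mem_range.mpr (by omega)
  have hgreedy : S.IsGreedySet (S.P (Finset.range M) y) E := by
    intro i hi j hj
    rw [coord_P, coord_P, if_pos (hsub hi)]
    split_ifs
    · exact hE i hi j hj
    · simp
  obtain ⟨ρ, hρ, hLam⟩ := exists_isGreedyOrdering_Lam_eq hgreedy hsub fun n hn => by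
    simp [coord_P, hn]
  have := hM ρ hρ hLam
  rwa [G_eq_P_Lam hρ.1, hLam, P_P_of_subset hsub] at this

theorem PartiallyGreedy.exists_norm_sub_P_le (hS : S.PartiallyGreedy) :
    ∃ C : ℝ, 0 ≤ C ∧ ∀ (x : X) (E : Finset ℕ), S.IsGreedySet x E →
      ‖x - S.P E x‖ ≤ C * ‖x - S.P (Finset.range E.card) x‖ := by
  obtain ⟨C, hC⟩ := hS
  refine ⟨|C|, abs_nonneg C, fun x E hE => hE.norm_sub_P_le ?_⟩
  filter_upwards [eventually_ge_atTop E.card] with M hM ρ hρ _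
  rw [← P_P_of_subset (Finset.range_subset_range.mpr hM) x]
  exact (hC _ ρ _ hρ).trans (by gcongr; exact le_abs_self C)

/-- If greedy sets satisfy the partially greedy estimate with constant `C`, and the partial sum
projections are bounded by `K`, then greedy sets satisfy the estimate against arbitrary
combinations of equally many basis vectors to their left. -/
theorem IsGreedySet.norm_sub_P_le_of_left {C K : ℝ} (hC0 : 0 ≤ C) (hK0 : 0 ≤ K)
    (hC : ∀ (x : X) (E : Finset ℕ), S.IsGreedySet x E →
      ‖x - S.P E x‖ ≤ C * ‖x - S.P (Finset.range E.card) x‖)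
    (hK : ∀ (n : ℕ) (x : X), ‖S.P (Finset.range n) x‖ ≤ K * ‖x‖)
    {x : X} {Λ A : Finset ℕ} (hΛ : S.IsGreedySet x Λ) (hcard : A.card = Λ.card)
    (hne : Λ.Nonempty) (hlt : ∀ i ∈ A, ∀ j ∈ Λ, i < j) (a : ℕ → ℝ) :
    ‖x - S.P Λ x‖ ≤
      (C * (1 + K) * K + 2 * C * (1 + K) + C * (1 + K) ^ 2) * ‖x - ∑ i ∈ A, a i • S.e i‖ := by
  have hqg : ∀ (y : X) (E : Finset ℕ), S.IsGreedySet y E →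
      ‖y - S.P E y‖ ≤ C * ((1 + K) * ‖y‖) := fun y E hE => by
    refine (hC y E hE).trans (mul_le_mul_of_nonneg_left ?_ hC0)
    linarith [norm_sub_le y (S.P (Finset.range E.card) y), hK E.card y]
  obtain ⟨i₀, hi₀, hmin⟩ := Λ.exists_min_image (fun i => |S.f i x|) hne
  set t := |S.f i₀ x|
  have ht0 : 0 ≤ t := abs_nonneg _
  have hout : ∀ j ∉ Λ, |S.f j x| ≤ t := fun j hj => hΛ i₀ hi₀ j hj
  set N := Λ.min' hne
  have hAN : ∀ i ∈ A, i < N := fun i hi => hlt i hi _ (Λ.min'_mem hne)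
  have hNΛ : ∀ j ∈ Λ, N ≤ j := fun j hj => Λ.min'_le j hj
  set z := x - ∑ i ∈ A, a i • S.e i with hz
  have fz : ∀ n ∉ A, S.f n z = S.f n x := fun n hn => by simp [hz, -map_sum, coord_sum, hn]
  set v := S.P (Finset.range N) z
  set w := z - v
  set L := (Finset.range N).filter fun i => t < |S.f i z|
  have fv : ∀ n, S.f n v = if n < N then S.f n z else 0 := fun n => by simp [v, coord_P]
  have fw : ∀ n, S.f n w = if n < N then 0 else S.f n x := fun n => by
    simp only [w, map_sub, fv]
    split_ifs with h
    · simp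
    · rw [fz n fun hn => h (hAN n hn), sub_zero]
  have memL : ∀ n, n ∈ L ↔ n < N ∧ t < |S.f n z| := fun n => by simp [L]
  have hLA : ∀ n ∈ L, n ∈ A := fun n hn => by
    by_contra hA
    have h := (memL n).mp hn
    rw [fz n hA] at h
    exact absurd (hout n fun hn' => absurd (hNΛ n hn') (by omega)) (by linarith)
  set h := v - S.P L v
  have fh : ∀ n, S.f n h = if n < N ∧ n ∉ L then S.f n z else 0 := fun n => by
    simp only [h, map_sub, coord_P, fv]
    split_ifs <;> simp_all
  set y := (2⁻¹ : ℝ) • (S.P (Finset.range N) x - h) + t • S.ind (Finset.range N \ A) + w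
  have fy : ∀ n, S.f n y = if n < N then
      (if n ∈ A then 2⁻¹ * (S.f n x - S.f n h) else t) else S.f n x := fun n => by
    simp only [y, map_add, map_smul, map_sub, coord_P, coord_ind, fw, smul_eq_mul,
      Finset.mem_sdiff, Finset.mem_range]
    by_cases hn : n < N
    · by_cases hA : n ∈ A
      · simp [hn, hA]
      · have hL : n ∉ L := fun hL => hA (hLA n hL)
        simp [hn, hA, fh, hL, fz n hA]
    · simp [hn, fh]
  set E := (Finset.range N \ A) ∪ Λ
  have memE : ∀ n, n ∈ E ↔ (n < N ∧ n ∉ A) ∨ n ∈ Λ := fun n => by simp [E]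
  have hEcard : E.card = N := by
    have hAsub : A ⊆ Finset.range N := fun i hi => Finset.mem_range.mpr (hAN i hi)
    rw [Finset.card_union_of_disjoint, Finset.card_sdiff_of_subset hAsub, Finset.card_range, ← hcard]
    · have := Finset.card_le_card hAsub
      rw [Finset.card_range] at this
      omega
    · refine Finset.disjoint_left.mpr fun i hi hi' => ?_
      simp only [Finset.mem_sdiff, Finset.mem_range] at hi
      exact absurd (hNΛ i hi') (by omega)
  have hvL : S.IsGreedySet v L := by
    intro i hi j hj
    have hi' := (memL i).mp hi
    rw [fv, fv, if_pos hi'.1]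
    split_ifs with hjN
    · have : ¬ t < |S.f j z| := fun hlt => hj ((memL j).mpr ⟨hjN, hlt⟩)
      linarith [hi'.2]
    · simp
  have hwΛ : S.IsGreedySet w Λ := by
    intro i hi j hj
    rw [fw, fw, if_neg (not_lt.mpr (hNΛ i hi))]
    split_ifs
    · simp
    · exact hΛ i hi j hj
  have hyE : S.IsGreedySet y E := by
    have hbig : ∀ i ∈ E, t ≤ |S.f i y| := by
      intro i hi
      rw [fy]
      rcases (memE i).mp hi with hi | hi
      · simp [hi.1, hi.2, abs_of_nonneg ht0]
      · rw [if_neg (not_lt.mpr (hNΛ i hi))]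
        exact hmin i hi
    have hsmall : ∀ j ∉ E, |S.f j y| ≤ t := by
      intro j hj
      have hj' := mt (memE j).mpr hj
      push Not at hj'
      have hx := hout j hj'.2
      rw [fy]
      by_cases hjN : j < N
      · have hh : |S.f j h| ≤ t := by
          rw [fh]
          split_ifs with hjL
          · exact not_lt.mp fun hlt => hjL.2 ((memL j).mpr ⟨hjN, hlt⟩)
          · simpa using ht0
        rw [if_pos hjN, if_pos (hj'.1 hjN), abs_mul, abs_of_nonneg (by norm_num : (0 : ℝ) ≤ 2⁻¹)]
        linarith [abs_sub (S.f j x) (S.f j h)]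
      · rwa [if_neg hjN]
    exact fun i hi j hj => (hsmall j hj).trans (hbig i hi)
  have hyw : y - S.P (Finset.range E.card) y = w := by
    refine S.ext_coord fun n => ?_
    rw [hEcard, map_sub, coord_P, fw, fy]
    by_cases hn : n < N <;> simp [hn]
  have hdecomp : x - S.P Λ x = h + (2 : ℝ) • (y - S.P E y) - (w - S.P Λ w) := by
    refine S.ext_coord fun n => ?_
    simp only [map_sub, map_add, map_smul, coord_P, smul_eq_mul, fy, fw, memE]
    by_cases hn : n < N
    · have hnΛ : n ∉ Λ := fun hn' => absurd (hNΛ n hn') (by omega)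
      by_cases hA : n ∈ A
      · simp [hn, hA, hnΛ]
      · have hL : n ∉ L := fun hL => hA (hLA n hL)
        simp [hn, hA, hnΛ, fh, hL, fz n hA]
    · by_cases hnΛ : n ∈ Λ
      · simp [hn, hnΛ, fh]
      · simp [hn, hnΛ, fh]
        ring
  have hv : ‖v‖ ≤ K * ‖z‖ := hK N z
  have hw : ‖w‖ ≤ (1 + K) * ‖z‖ := by linarith [norm_sub_le z v]
  have norm_h_le : ‖h‖ ≤ C * ((1 + K) * (K * ‖z‖)) := (hqg v L hvL).trans (by gcongr)
  have norm_y_le : ‖y - S.P E y‖ ≤ C * ((1 + K) * ‖z‖) := by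
    refine (hC y E hyE).trans ?_
    rw [hyw]
    gcongr
  have norm_w_le : ‖w - S.P Λ w‖ ≤ C * ((1 + K) * ((1 + K) * ‖z‖)) :=
    (hqg w Λ hwΛ).trans (by gcongr)
  rw [hdecomp]
  have htri_sub := norm_sub_le (h + (2 : ℝ) • (y - S.P E y)) (w - S.P Λ w)
  have htri_add := norm_add_le h ((2 : ℝ) • (y - S.P E y))
  rw [norm_smul, Real.norm_two] at htri_add
  linarith

/-- The estimate against combinations of basis vectors to the left of a greedy set implies the
partially greedy estimate. -/
theorem IsGreedySet.norm_sub_P_le_range {C : ℝ}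
    (hC : ∀ (x : X) (E A : Finset ℕ) (a : ℕ → ℝ), S.IsGreedySet x E → A.card = E.card →
      (∀ i ∈ A, ∀ j ∈ E, i < j) → ‖x - S.P E x‖ ≤ C * ‖x - ∑ i ∈ A, a i • S.e i‖)
    {x : X} {E : Finset ℕ} (hE : S.IsGreedySet x E) :
    ‖x - S.P E x‖ ≤ C * ‖x - S.P (Finset.range E.card) x‖ := by
  set D := Finset.range E.card with hD
  set y := x - S.P (E ∩ D) x with hy
  have fy : ∀ n, S.f n y = if n ∈ E ∧ n ∈ D then 0 else S.f n x := fun n => by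
    simp only [hy, map_sub, coord_P, Finset.mem_inter]
    split_ifs <;> simp
  have hyE : S.IsGreedySet y (E \ D) := by
    intro i hi j hj
    rw [Finset.mem_sdiff] at hi hj
    rw [fy, fy i, if_neg fun h : i ∈ E ∧ i ∈ D => hi.2 h.2]
    split_ifs with h
    · simp
    · exact hE i hi.1 j (by tauto)
  have key := hC y (E \ D) (D \ E) (fun i => S.f i x) hyE
    (Finset.card_sdiff_comm (by simp [hD])) fun i hi j hj => by
      simp only [hD, Finset.mem_sdiff, Finset.mem_range] at hi hj
      omega
  have hleft : y - S.P (E \ D) y = x - S.P E x := by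
    refine S.ext_coord fun n => ?_
    simp only [map_sub, coord_P, fy, Finset.mem_sdiff]
    by_cases h : n ∈ E <;> by_cases h' : n ∈ D <;> simp [h, h']
  have hright : y - ∑ i ∈ D \ E, S.f i x • S.e i = x - S.P D x := by
    refine S.ext_coord fun n => ?_
    simp only [map_sub, coord_P, coord_sum, fy, Finset.mem_sdiff]
    by_cases h : n ∈ E <;> by_cases h' : n ∈ D <;> simp [h, h']
  rwa [hleft, hright] at key

end SchauderBasisSys

open SchauderBasisSys

/-- A Schauder basis of a real Banach space is partially greedy if and
only if there is a constant `C` such that `‖x - G_m(x)‖ ≤ C ‖x - ∑_{i ∈ A} a_i e_i‖` for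
every `x`, every `m`, every greedy ordering, every finite `A` with `|A| = m` and
`max A < α_m(x) = min Λ_m(x)`, and all real scalars `(a_i)` (property `(*)`,
i.e. `‖x - G_m(x)‖ ≤ C σ^L_m(x)`). -/
theorem stmt_5 {X : Type*} [NormedAddCommGroup X] [NormedSpace ℝ X] [CompleteSpace X]
    (S : SchauderBasisSys X) :
    S.PartiallyGreedy ↔
      ∃ C : ℝ, ∀ (x : X) (ρ : ℕ → ℕ) (m : ℕ) (A : Finset ℕ) (a : ℕ → ℝ),
        S.IsGreedyOrdering x ρ → A.card = m →
        (∀ i ∈ A, ∀ j ∈ Lam ρ m, i < j) →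
        ‖x - S.G x ρ m‖ ≤ C * ‖x - ∑ i ∈ A, a i • S.e i‖ := by
  constructor
  · intro hS
    obtain ⟨C, hC0, hC⟩ := hS.exists_norm_sub_P_le
    obtain ⟨K, hK0, hK⟩ := S.exists_norm_P_range_le
    refine ⟨C * (1 + K) * K + 2 * C * (1 + K) + C * (1 + K) ^ 2 + 1,
      fun x ρ m A a hρ hA hlt => ?_⟩
    rcases Nat.eq_zero_or_pos m with rfl | hm
    · rw [Finset.card_eq_zero.mp hA]
      simp only [G, Finset.range_zero, Finset.sum_empty, sub_zero]
      refine le_mul_of_one_le_left (norm_nonneg x) ?_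
      have : 0 ≤ C * (1 + K) * K + 2 * C * (1 + K) + C * (1 + K) ^ 2 := by positivity
      linarith
    · rw [G_eq_P_Lam hρ.1]
      have hcard := card_Lam hρ.1 m
      refine ((hρ.isGreedySet_Lam m).norm_sub_P_le_of_left hC0 hK0 hC hK (hA.trans hcard.symm)
        (Finset.card_pos.mp (hm.trans_eq hcard.symm)) hlt a).trans ?_
      exact mul_le_mul_of_nonneg_right (by linarith) (norm_nonneg _)
  · rintro ⟨C, hC⟩
    have hset : ∀ (x : X) (E A : Finset ℕ) (a : ℕ → ℝ), S.IsGreedySet x E → A.card = E.card →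
        (∀ i ∈ A, ∀ j ∈ E, i < j) → ‖x - S.P E x‖ ≤ C * ‖x - ∑ i ∈ A, a i • S.e i‖ :=
      fun x E A a hE hcard hlt => hE.norm_sub_P_le <| Eventually.of_forall fun M ρ hρ hLam =>
        hC _ ρ _ A a hρ hcard (hLam.symm ▸ hlt)
    refine ⟨C, fun x ρ m hρ => ?_⟩
    have := IsGreedySet.norm_sub_P_le_range hset (hρ.isGreedySet_Lam m)
    rwa [← G_eq_P_Lam hρ.1, card_Lam hρ.1] at this
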